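/- Let 0 < ε < 1/2 and n ≥ 64, and let T be an ε-noisy boolean decision tree on n variables such that, for x uniform on {0,1}^n and over the internal noise of T, Pr[ T(x) = Parity(x) ] ≥ 3/4, where Parity(x) = x_1 ⊕ ⋯ ⊕ x_n. Then the depth of T is strictly greater than (n/2) · log₂(n/64) / log₂(1/ε). In particular, any ε-noisy decision tree computing parity with error at most 1/4 with respect to a uniform input has depth Ω(n · (log n) / log(1/ε)). -/

import Mathlib

/-- A boolean decision tree on `n` variables with leaves labeled by `L`:
internal nodes are labeled by a variable index and have two children
(child `0` and child `1`). -/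
inductive NoisyTree (n : ℕ) (L : Type) : Type where
  | leaf : L → NoisyTree n L
  | node : Fin n → NoisyTree n L → NoisyTree n L → NoisyTree n L

namespace NoisyTree

/-- Depth of a tree: maximum length of a root-to-leaf path. -/
def depth {n : ℕ} {L : Type} : NoisyTree n L → ℕ
  | .leaf _ => 0
  | .node _ t0 t1 => max (depth t0) (depth t1) + 1

/-- The leaf(-label) distribution of the `ε`-noisy computation of the tree on
input `x`: at a node labeled `i`, move to the child indexed by `x i ⊕ η` where
`η` is a fresh independent Bernoulli(`ε`) bit.  `leafDist ε t x l` is the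
probability that the noisy computation reaches a leaf labeled `l`. -/
def leafDist {n : ℕ} {L : Type} [DecidableEq L] (ε : ℝ) :
    NoisyTree n L → (Fin n → Bool) → L → ℝ
  | .leaf l, _, l' => if l' = l then 1 else 0
  | .node i t0 t1, x, l' =>
      (if x i then ε else 1 - ε) * leafDist ε t0 x l' +
      (if x i then 1 - ε else ε) * leafDist ε t1 x l'

end NoisyTree

/-- A deterministic boolean decision tree on `n` variables with leaves labeled
by `L`: at a node labeled `i` the true value of `x i` is read and the
computation branches on it. -/
inductive DetTree (n : ℕ) (L : Type) : Type where
  | leaf : L → DetTree n L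
  | node : Fin n → DetTree n L → DetTree n L → DetTree n L

namespace DetTree

/-- The leaf label reached by the deterministic computation on input `x`. -/
def eval {n : ℕ} {L : Type} : DetTree n L → (Fin n → Bool) → L
  | .leaf l, _ => l
  | .node i t0 t1, x => if x i then eval t1 x else eval t0 x

/-- The set of distinct variables queried by the deterministic computation on
input `x`. -/
def queried {n : ℕ} {L : Type} : DetTree n L → (Fin n → Bool) → Finset (Fin n)
  | .leaf _, _ => ∅
  | .node i t0 t1, x => insert i (if x i then queried t1 x else queried t0 x)

end DetTree

/-- The parity function on `n` bits: `Parity(x) = x_1 ⊕ ⋯ ⊕ x_n`. -/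
def parityFun {n : ℕ} (x : Fin n → Bool) : Bool :=
  decide ((Finset.univ.filter fun i => x i = true).card % 2 = 1)

/-! Reaching a given node of the tree turns the uniform input into a product distribution: each
noisy reading of `x i` multiplies the weight of `x` by a factor depending on `x i` alone. A reading
changes the odds between the two values of a bit by a factor at most `1 / ε`, so after `k i`
readings of `x i` the bias of that bit is at most `1 - ε ^ k i`. The bias of the parity is the
product of the biases of the bits, and as at most `D` readings are made in total, convexity of
`k ↦ ε ^ k` gives `∏ i, (1 - ε ^ k i) ≤ exp (-∑ i, ε ^ k i) ≤ exp (-(n * ε ^ (D / n)))`. A success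
probability of `(1 + δ) / 2` thus requires `n * ε ^ (D / n) ≤ log (1 / δ)`. -/

open Finset Real

section WeightedSum

variable {ι α : Type*} [Fintype ι] [DecidableEq ι] [Fintype α]

/-- The unnormalised expectation of `g` under the product weight `x ↦ ∏ i, w i (x i)`. Not
normalising spares the conditioning on events of positive probability. -/
def weightedSum (w : ι → α → ℝ) (g : (ι → α) → ℝ) : ℝ :=
  ∑ x, (∏ i, w i (x i)) * g x

theorem weightedSum_prod (w g : ι → α → ℝ) :
    weightedSum w (fun x => ∏ i, g i (x i)) = ∏ i, ∑ a, w i a * g i a := by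
  simp only [weightedSum, ← prod_mul_distrib, Fintype.prod_sum]

theorem weightedSum_one (w : ι → α → ℝ) : weightedSum w (fun _ => 1) = ∏ i, ∑ a, w i a := by
  simpa using weightedSum_prod w fun _ _ => 1

theorem weightedSum_add (w : ι → α → ℝ) (g h : (ι → α) → ℝ) :
    weightedSum w (g + h) = weightedSum w g + weightedSum w h := by
  simp only [weightedSum, Pi.add_apply, mul_add, sum_add_distrib]

theorem weightedSum_const_mul (w : ι → α → ℝ) (c : ℝ) (g : (ι → α) → ℝ) :
    weightedSum w (fun x => c * g x) = c * weightedSum w g := by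
  simp only [weightedSum, mul_left_comm _ c, mul_sum]

theorem weightedSum_mul_mulSingle (w : ι → α → ℝ) (i : ι) (v : α → ℝ) (g : (ι → α) → ℝ) :
    weightedSum (w * Pi.mulSingle i v) g = weightedSum w (fun x => v (x i) * g x) := by
  have prod_eq (x : ι → α) : ∏ j, (Pi.mulSingle i v : ι → α → ℝ) j (x j) = v (x i) := by
    rw [Fintype.prod_eq_single i fun j hj => by simp [Pi.mulSingle_eq_of_ne hj],
      Pi.mulSingle_eq_same]
  simp only [weightedSum, Pi.mul_apply, prod_mul_distrib, prod_eq, mul_assoc]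

end WeightedSum

section IsBalanced

/-- The two values of a nonnegative weight on a bit are within a factor `r` of each other. This is
the invariant satisfied by the likelihood of an input bit given some noisy readings of it; it is
stated without division because a likelihood may vanish. -/
structure IsBalanced (r : ℝ) (w : Bool → ℝ) : Prop where
  nonneg : ∀ b, 0 ≤ w b
  mul_le_not : ∀ b, r * w b ≤ w !b

variable {r s : ℝ} {v w : Bool → ℝ}

theorem isBalanced_one : IsBalanced 1 1 where
  nonneg _ := zero_le_one
  mul_le_not _ := (one_mul _).le

theorem IsBalanced.mul (hw : IsBalanced r w) (hv : IsBalanced s v) (hs : 0 ≤ s) :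
    IsBalanced (r * s) (w * v) where
  nonneg b := mul_nonneg (hw.nonneg b) (hv.nonneg b)
  mul_le_not b := calc
    r * s * (w b * v b) = (r * w b) * (s * v b) := by ring
    _ ≤ w (!b) * v (!b) :=
      mul_le_mul (hw.mul_le_not b) (hv.mul_le_not b) (mul_nonneg hs (hv.nonneg b)) (hw.nonneg _)

theorem IsBalanced.abs_sub_le (hw : IsBalanced r w) (hr : r ≤ 1) :
    |w false - w true| ≤ (1 - r) * (w true + w false) := by
  have hft : r * w false ≤ w true := hw.mul_le_not false
  have htf : r * w true ≤ w false := hw.mul_le_not true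
  have hf := mul_nonneg (sub_nonneg.2 hr) (hw.nonneg false)
  have ht := mul_nonneg (sub_nonneg.2 hr) (hw.nonneg true)
  rw [abs_le]
  constructor <;> linarith

theorem abs_prod_sub_le_of_isBalanced {ι : Type*} [Fintype ι] {r : ι → ℝ} {w : ι → Bool → ℝ}
    (hw : ∀ i, IsBalanced (r i) (w i)) (hr : ∀ i, r i ≤ 1) :
    |∏ i, (w i false - w i true)| ≤ (∏ i, (1 - r i)) * ∏ i, (w i true + w i false) := by
  rw [abs_prod, ← prod_mul_distrib]
  exact prod_le_prod (fun _ _ => abs_nonneg _) fun i _ => (hw i).abs_sub_le (hr i)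

end IsBalanced

section Parity

variable {n : ℕ}

/-- The sign `(-1) ^ b`, which turns exclusive or into multiplication. -/
def boolSign (b : Bool) : ℝ :=
  if b then -1 else 1

theorem boolSign_parityFun (x : Fin n → Bool) : boolSign (parityFun x) = ∏ i, boolSign (x i) := by
  simp only [boolSign, prod_ite, prod_const, one_pow, mul_one, parityFun, decide_eq_true_eq,
    ← Nat.odd_iff]
  split_ifs with h
  · exact h.neg_one_pow.symm
  · exact (Nat.not_odd_iff_even.1 h).neg_one_pow.symm

theorem ite_eq_half_add_boolSign (b c : Bool) :
    (if b = c then (1 : ℝ) else 0) = 1 / 2 + boolSign c / 2 * boolSign b := by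
  cases b <;> cases c <;> norm_num [boolSign]

theorem weightedSum_boolSign_parityFun (w : Fin n → Bool → ℝ) :
    weightedSum w (fun x => boolSign (parityFun x)) = ∏ i, (w i false - w i true) := by
  simp only [boolSign_parityFun, weightedSum_prod w fun _ => boolSign]
  exact prod_congr rfl fun i _ => by simp [boolSign, sub_eq_neg_add]

theorem weightedSum_parityFun_eq_le {r : Fin n → ℝ} {w : Fin n → Bool → ℝ}
    (hw : ∀ i, IsBalanced (r i) (w i)) (hr : ∀ i, r i ≤ 1) (l : Bool) :
    weightedSum w (fun x => if parityFun x = l then 1 else 0) ≤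
      (1 + ∏ i, (1 - r i)) / 2 * weightedSum w (fun _ => 1) := by
  have split : weightedSum w (fun x => if parityFun x = l then 1 else 0) =
      1 / 2 * weightedSum w (fun _ => 1) +
        boolSign l / 2 * weightedSum w (fun x => boolSign (parityFun x)) := by
    simp only [ite_eq_half_add_boolSign, ← weightedSum_const_mul, ← weightedSum_add, mul_one]
    rfl
  have bias := abs_le.1 (abs_prod_sub_le_of_isBalanced hw hr)
  simp only [split, weightedSum_boolSign_parityFun, weightedSum_one, Fintype.sum_bool]
  cases l <;> simp only [boolSign, if_true, Bool.false_eq_true, if_false] <;> linarith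

end Parity

section ProductBound

variable {ι : Type*} [Fintype ι] {ε : ℝ} {k : ι → ℕ} {D : ℕ}

theorem card_mul_rpow_le_sum_pow [Nonempty ι] (hε0 : 0 < ε) (hε1 : ε ≤ 1) (hk : ∑ i, k i ≤ D) :
    Fintype.card ι * ε ^ (D / Fintype.card ι : ℝ) ≤ ∑ i, ε ^ k i := by
  set N : ℝ := (Fintype.card ι : ℝ)
  have hN : 0 < N := by positivity
  have hkD : ∑ i, N⁻¹ * (k i : ℝ) ≤ D / N := by
    rw [← mul_sum, inv_mul_eq_div]
    gcongr
    exact_mod_cast hk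
  have jensen : ε ^ (∑ i, N⁻¹ * (k i : ℝ)) ≤ ∑ i, N⁻¹ * ε ^ (k i : ℝ) :=
    (convexOn_rpow_left hε0).map_sum_le (fun _ _ => by positivity)
      (by simp [N]) (fun _ _ => Set.mem_univ _)
  calc N * ε ^ (D / N) ≤ N * ∑ i, N⁻¹ * ε ^ (k i : ℝ) := by
        gcongr
        exact (rpow_le_rpow_of_exponent_ge hε0 hε1 hkD).trans jensen
    _ = ∑ i, ε ^ k i := by
        simp only [← mul_sum, mul_inv_cancel_left₀ hN.ne', rpow_natCast]

theorem prod_one_sub_pow_le_exp [Nonempty ι] (hε0 : 0 < ε) (hε1 : ε ≤ 1) (hk : ∑ i, k i ≤ D) :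
    ∏ i, (1 - ε ^ k i) ≤ exp (-(Fintype.card ι * ε ^ (D / Fintype.card ι : ℝ))) := calc
  ∏ i, (1 - ε ^ k i) ≤ ∏ i, exp (-ε ^ k i) :=
    prod_le_prod (fun i _ => sub_nonneg.2 (pow_le_one₀ hε0.le hε1)) fun i _ =>
      one_sub_le_exp_neg _
  _ = exp (-∑ i, ε ^ k i) := by rw [← exp_sum, sum_neg_distrib]
  _ ≤ _ := exp_le_exp.2 (neg_le_neg (card_mul_rpow_le_sum_pow hε0 hε1 hk))

end ProductBound

section NoisyReading

variable {ι : Type*} [DecidableEq ι] {ε : ℝ}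

/-- The probability that an `ε`-noisy reading of the bit `b` returns `c`. -/
def readProb (ε : ℝ) (c b : Bool) : ℝ :=
  if b = c then 1 - ε else ε

theorem readProb_false_add_readProb_true (ε : ℝ) (b : Bool) :
    readProb ε false b + readProb ε true b = 1 := by
  cases b <;> simp [readProb]

theorem isBalanced_readProb (hε0 : 0 ≤ ε) (hε1 : ε ≤ 1 / 2) (c : Bool) :
    IsBalanced ε (readProb ε c) where
  nonneg b := by
    unfold readProb
    split_ifs <;> linarith
  mul_le_not b := by
    have from_correct : ε * (1 - ε) ≤ ε := mul_le_of_le_one_right hε0 (by linarith)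
    have from_flipped : ε * ε ≤ 1 - ε :=
      (mul_le_of_le_one_right hε0 (by linarith)).trans (by linarith)
    cases b <;> cases c <;> simpa [readProb]

/-- The product weight `w` after a noisy reading of the `i`-th bit has returned `c`. -/
noncomputable def conditionOnRead (ε : ℝ) (w : ι → Bool → ℝ) (i : ι) (c : Bool) :
    ι → Bool → ℝ :=
  w * Pi.mulSingle i (readProb ε c)

theorem weightedSum_conditionOnRead_add [Fintype ι] (w : ι → Bool → ℝ) (i : ι)
    (g₀ g₁ : (ι → Bool) → ℝ) :
    weightedSum (conditionOnRead ε w i false) g₀ + weightedSum (conditionOnRead ε w i true) g₁ =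
      weightedSum w
        (fun x => readProb ε false (x i) * g₀ x + readProb ε true (x i) * g₁ x) := by
  rw [conditionOnRead, conditionOnRead, weightedSum_mul_mulSingle, weightedSum_mul_mulSingle,
    ← weightedSum_add]
  rfl

theorem isBalanced_conditionOnRead (hε0 : 0 ≤ ε) (hε1 : ε ≤ 1 / 2) {w : ι → Bool → ℝ}
    {k : ι → ℕ} (hw : ∀ j, IsBalanced (ε ^ k j) (w j)) (i : ι) (c : Bool) (j : ι) :
    IsBalanced (ε ^ (k j + (Pi.single i 1 : ι → ℕ) j)) (conditionOnRead ε w i c j) := by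
  simp only [conditionOnRead, Pi.mul_apply, pow_add]
  refine (hw j).mul ?_ (by positivity)
  obtain rfl | hj := eq_or_ne j i
  · simpa using isBalanced_readProb hε0 hε1 c
  · simpa [hj] using isBalanced_one

end NoisyReading

namespace NoisyTree

variable {n : ℕ} {ε : ℝ}

theorem leafDist_node {L : Type} [DecidableEq L] (i : Fin n) (t₀ t₁ : NoisyTree n L)
    (x : Fin n → Bool) (l : L) :
    (node i t₀ t₁).leafDist ε x l =
      readProb ε false (x i) * t₀.leafDist ε x l + readProb ε true (x i) * t₁.leafDist ε x l := by
  cases h : x i <;> simp [leafDist, readProb, h]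

theorem weightedSum_leafDist_parityFun_le [NeZero n] (hε0 : 0 < ε) (hε1 : ε ≤ 1 / 2) {D : ℕ}
    (T : NoisyTree n Bool) {w : Fin n → Bool → ℝ} {k : Fin n → ℕ}
    (hw : ∀ i, IsBalanced (ε ^ k i) (w i)) (hD : ∑ i, k i + T.depth ≤ D) :
    weightedSum w (fun x => T.leafDist ε x (parityFun x)) ≤
      (1 + exp (-(n * ε ^ (D / n : ℝ)))) / 2 * weightedSum w (fun _ => 1) := by
  induction T generalizing w k with
  | leaf l =>
    have hprod := prod_one_sub_pow_le_exp hε0 (by linarith) (le_of_add_le_left hD)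
    have hmass : 0 ≤ weightedSum w (fun _ => 1) := by
      rw [weightedSum_one]
      exact prod_nonneg fun i _ => sum_nonneg fun b _ => (hw i).nonneg b
    rw [Fintype.card_fin] at hprod
    refine (weightedSum_parityFun_eq_le hw (fun i => pow_le_one₀ hε0.le (by linarith)) l).trans ?_
    gcongr
  | node i t₀ t₁ ih₀ ih₁ =>
    have hsum : ∑ j, (k j + (Pi.single i 1 : Fin n → ℕ) j) = ∑ j, k j + 1 := by
      simp [sum_add_distrib]
    have hw' := isBalanced_conditionOnRead hε0.le hε1 hw i
    have hmass : weightedSum (conditionOnRead ε w i false) (fun _ => 1) +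
        weightedSum (conditionOnRead ε w i true) (fun _ => 1) = weightedSum w (fun _ => 1) := by
      simp only [weightedSum_conditionOnRead_add, mul_one, readProb_false_add_readProb_true]
    simp only [depth] at hD
    simp only [leafDist_node, ← weightedSum_conditionOnRead_add, ← hmass, mul_add]
    exact add_le_add (ih₀ (hw' false) (by omega)) (ih₁ (hw' true) (by omega))

theorem parity_success_le [NeZero n] (hε0 : 0 < ε) (hε1 : ε ≤ 1 / 2) (T : NoisyTree n Bool) :
    (1 / 2 ^ n) * ∑ x : Fin n → Bool, T.leafDist ε x (parityFun x) ≤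
      (1 + exp (-(n * ε ^ (T.depth / n : ℝ)))) / 2 := by
  have h := weightedSum_leafDist_parityFun_le hε0 hε1 (D := T.depth) (w := 1) (k := 0) T
    (fun _ => by simpa using isBalanced_one) (by simp)
  have hmass : weightedSum (1 : Fin n → Bool → ℝ) (fun _ => 1) = 2 ^ n := by
    simp [weightedSum]
  rw [hmass] at h
  rw [one_div, inv_mul_le_iff₀ (by positivity), mul_comm]
  simpa [weightedSum] using h

end NoisyTree

section DepthBound

variable {n D L ε : ℝ}

theorem mul_logb_div_logb_le (hn : 0 < n) (hL : 0 < L) (hε0 : 0 < ε) (hε1 : ε < 1)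
    (h : n * ε ^ (D / n) ≤ L) : n * logb 2 (n / L) / logb 2 (1 / ε) ≤ D := by
  have hratio : n / L ≤ (1 / ε) ^ (D / n) := by
    rwa [one_div, inv_rpow hε0.le, div_le_iff₀ hL, inv_mul_eq_div, le_div_iff₀ (by positivity)]
  have hlogb : logb 2 (n / L) ≤ D / n * logb 2 (1 / ε) := by
    rw [← logb_rpow_eq_mul_logb_of_pos (by positivity)]
    exact logb_le_logb_of_le one_lt_two (by positivity) hratio
  rw [div_le_iff₀ (logb_pos one_lt_two (one_lt_one_div hε0 hε1))]
  calc n * logb 2 (n / L) ≤ n * (D / n * logb 2 (1 / ε)) := by gcongr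
    _ = D * logb 2 (1 / ε) := by field_simp

theorem half_mul_logb_div_lt (hn : 64 ≤ n) :
    n / 2 * logb 2 (n / 64) < n * logb 2 (n / log 2) := by
  have hn0 : 0 < n := by linarith
  have hlogb : logb 2 (n / 64) < logb 2 (n / log 2) :=
    logb_lt_logb one_lt_two (by positivity)
      (div_lt_div_of_pos_left hn0 (log_pos one_lt_two) (by linarith [log_two_lt_d9]))
  have hlogb_nonneg : 0 ≤ logb 2 (n / 64) := logb_nonneg one_lt_two (by linarith)
  exact mul_lt_mul' (by linarith) hlogb hlogb_nonneg hn0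

end DepthBound

theorem noisy_tree_parity_depth_lb_general {n : ℕ} [NeZero n] {ε δ : ℝ}
    (hε0 : 0 < ε) (hε1 : ε ≤ 1 / 2) (hδ : 0 < δ) (T : NoisyTree n Bool)
    (hsucc : (1 + δ) / 2 ≤
      (1 / 2 ^ n) * ∑ x : Fin n → Bool, T.leafDist ε x (parityFun x)) :
    n * logb 2 (n / log (1 / δ)) / logb 2 (1 / ε) ≤ T.depth := by
  have hn : (0 : ℝ) < n := Nat.cast_pos.2 (NeZero.pos n)
  have hδ_le : δ ≤ exp (-(n * ε ^ (T.depth / n : ℝ))) := by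
    linarith [T.parity_success_le hε0 hε1]
  have hlog : n * ε ^ (T.depth / n : ℝ) ≤ log (1 / δ) := by
    rw [one_div, log_inv, le_neg]
    exact (log_le_iff_le_exp hδ).2 hδ_le
  have hlog_pos : 0 < log (1 / δ) := lt_of_lt_of_le (by positivity) hlog
  exact mul_logb_div_logb_le hn hlog_pos hε0 (by linarith) hlog

/-- If `n ≥ 64` and `T` is an `ε`-noisy boolean decision tree (leaves labeled by
output bits) computing parity with success probability at least `3/4` with respect
to a uniform input `x` and the internal noise of `T`, then the depth of `T` is
strictly greater than `(n/2) · log₂(n/64) / log₂(1/ε)`; in particular any such tree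
has depth `Ω(n log n / log(1/ε))`. -/
theorem noisy_tree_parity_depth_lb {n : ℕ} (ε : ℝ)
    (hε0 : 0 < ε) (hε1 : ε < 1 / 2) (hn : 64 ≤ n)
    (T : NoisyTree n Bool)
    (hsucc : (3 / 4 : ℝ) ≤
      (1 / 2 ^ n) * ∑ x : Fin n → Bool, T.leafDist ε x (parityFun x)) :
    ((n : ℝ) / 2) * Real.logb 2 ((n : ℝ) / 64) / Real.logb 2 (1 / ε) <
      (T.depth : ℝ) := by
  have : NeZero n := ⟨by omega⟩
  have h := noisy_tree_parity_depth_lb_general hε0 hε1.le one_half_pos T (by linarith)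
  rw [one_div_one_div] at h
  refine (div_lt_div_of_pos_right (half_mul_logb_div_lt (by exact_mod_cast hn)) ?_).trans_le h
  exact logb_pos one_lt_two (one_lt_one_div hε0 (by linarith))
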